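/- arXiv:2112.10739 — 8 statements merged into one kernel-verified Lean document; each statement's English description precedes it below -/
import Mathlib

section
/- Let α be an irrational real number. If β is a populated multi-index whose homogeneity |β| = α(1+[β]) + |β|_p is an integer (in particular, if |β| ∈ ℕ), then β is purely polynomial, i.e. β = e_n for some n ∈ ℕ² \ {(0,0)}. -/
open Finsupp

noncomputable section

/-- The index set `I`: symbols `z_k` for `k : ℕ` (left summand) and `z_n` for
`n ∈ ℕ² \ {(0,0)}` (right summand). -/
abbrev RSIdx : Type := ℕ ⊕ {n : ℕ × ℕ // n ≠ (0, 0)}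

/-- Multi-indices: finitely supported functions from the index set to `ℕ`. -/
abbrev MIdx : Type := RSIdx →₀ ℕ

/-- The unit multi-index `e_k`. -/
def eK (k : ℕ) : MIdx := Finsupp.single (Sum.inl k) 1

/-- The unit multi-index `e_n` for `n ≠ (0,0)`. -/
def eN (n : {n : ℕ × ℕ // n ≠ (0, 0)}) : MIdx := Finsupp.single (Sum.inr n) 1

/-- The scaled length `[β] = Σ_k k·β(k) − Σ_{n≠(0,0)} β(n)`. -/
def slen (β : MIdx) : ℤ :=
  β.sum fun i m =>
    match i with
    | Sum.inl k => (k : ℤ) * (m : ℤ)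
    | Sum.inr _ => -(m : ℤ)

/-- The parabolic length `|n| = n₁ + 2 n₂` of `n ∈ ℕ²`. -/
def plen (n : ℕ × ℕ) : ℕ := n.1 + 2 * n.2

/-- The polynomial part `|β|_p = Σ_{n≠(0,0)} |n|·β(n)`. -/
def polyPart (β : MIdx) : ℕ :=
  β.sum fun i m =>
    match i with
    | Sum.inl _ => 0
    | Sum.inr n => plen n.val * m

/-- The homogeneity `|β| = α(1+[β]) + |β|_p`. -/
def homog (α : ℝ) (β : MIdx) : ℝ := α * (1 + (slen β : ℝ)) + (polyPart β : ℝ)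

/-- `β` is purely polynomial iff `β = e_n` for some `n ≠ (0,0)`. -/
def PurelyPoly (β : MIdx) : Prop := ∃ n, β = eN n

/-- `β` is populated iff it is purely polynomial or `[β] ≥ 0`. -/
def Populated (β : MIdx) : Prop := PurelyPoly β ∨ 0 ≤ slen β

/-- The ordinal `|β|_≺ = [β] + (1/2)|β|_p + (1/4)β(0)`. -/
def precNorm (β : MIdx) : ℝ :=
  (slen β : ℝ) + (polyPart β : ℝ) / 2 + (β (Sum.inl 0) : ℝ) / 4

/-- If `α` is irrational and `β` is a populated multi-index whose homogeneity
`|β| = α(1+[β]) + |β|_p` is an integer, then `β` is purely polynomial. -/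
theorem statement0 (α : ℝ) (hα : Irrational α) (β : MIdx) (hβ : Populated β)
    (hint : ∃ m : ℤ, homog α β = (m : ℝ)) : PurelyPoly β := by
  rcases hβ with h | h
  · exact h
  · exfalso
    obtain ⟨m, hm⟩ := hint
    unfold homog at hm
    have hpos : (0 : ℝ) < 1 + (slen β : ℝ) := by
      have : (0 : ℝ) ≤ (slen β : ℝ) := by exact_mod_cast h
      linarith
    apply hα
    refine ⟨((m : ℚ) - (polyPart β : ℚ)) / (1 + (slen β : ℚ)), ?_⟩
    push_cast
    rw [div_eq_iff hpos.ne']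
    linarith
end
end

section
/- Let α > 0. The set A := { |β| : β a populated multi-index } of homogeneities is locally finite: for every real number M, the set A ∩ (−∞, M] is finite. -/
open Finsupp

noncomputable section

/-- For `α > 0`, the set `A` of homogeneities of populated multi-indices is locally
finite: its intersection with `(−∞, M]` is finite for every `M`. -/
theorem statement2 (α : ℝ) (hα : 0 < α) (M : ℝ) :
    {x : ℝ | (∃ β : MIdx, Populated β ∧ homog α β = x) ∧ x ≤ M}.Finite := by
  have key : ∀ β : MIdx, Populated β → 0 ≤ 1 + slen β := by
    rintro β (⟨n, rfl⟩ | h)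
    · simp [slen, eN]
    · linarith
  apply Set.Finite.subset
    (((Set.finite_Iic (Nat.floor (M / α))).prod (Set.finite_Iic (Nat.floor M))).image
      (fun p : ℕ × ℕ => α * (p.1 : ℝ) + (p.2 : ℝ)))
  rintro x ⟨⟨β, hβ, rfl⟩, hx⟩
  obtain ⟨a, ha⟩ := Int.eq_ofNat_of_zero_le (key β hβ)
  have ha' : (1 + (slen β : ℝ)) = (a : ℝ) := by exact_mod_cast ha
  unfold homog at hx ⊢
  rw [ha'] at hx ⊢
  have h1 : 0 ≤ α * (a : ℝ) := by positivity
  have h2 : (0 : ℝ) ≤ (polyPart β : ℝ) := by positivity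
  refine ⟨(a, polyPart β), ⟨?_, ?_⟩, rfl⟩
  · apply Nat.le_floor
    rw [le_div_iff₀ hα]
    linarith
  · apply Nat.le_floor
    linarith
end
end

section
/- For every real number M, the set of populated multi-indices β with |β|_≺ ≤ M is finite (coercivity of the ordinal |·|_≺ on populated multi-indices). -/
open Finsupp

noncomputable section

/-- Positive weights on the index set. -/
def wt : RSIdx → ℕ
  | Sum.inl k => if k = 0 then 1 else k
  | Sum.inr n => plen n.val

lemma plen_pos (n : {n : ℕ × ℕ // n ≠ (0, 0)}) : 1 ≤ plen n.val := by
  obtain ⟨⟨a, b⟩, h⟩ := n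
  simp only [plen]
  by_contra hc
  apply h
  ext <;> simp <;> omega

lemma wt_pos (i : RSIdx) : 1 ≤ wt i := by
  rcases i with k | n
  · simp only [wt]; split_ifs <;> omega
  · exact plen_pos n

lemma wt_fin (N : ℕ) : {i : RSIdx | wt i ≤ N}.Finite := by
  have h1 : (Sum.inl '' (Set.Iic N) : Set RSIdx).Finite := (Set.finite_Iic N).image _
  have h2 : ({n : {n : ℕ × ℕ // n ≠ (0, 0)} | n.val ∈ Set.Iic (N, N)}).Finite :=
    (Set.finite_Iic ((N, N) : ℕ × ℕ)).preimage Subtype.val_injective.injOn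
  refine (h1.union (h2.image Sum.inr)).subset ?_
  rintro (k | n) h
  · left
    refine ⟨k, ?_, rfl⟩
    simp only [wt, Set.mem_setOf_eq] at h
    simp only [Set.mem_Iic]
    split_ifs at h <;> omega
  · right
    refine ⟨n, ?_, rfl⟩
    simp only [wt, plen, Set.mem_setOf_eq] at h
    simp only [Set.mem_setOf_eq, Set.mem_Iic, Prod.le_def]
    constructor <;> omega

lemma wt_le (β : MIdx) :
    (∑ i ∈ β.support, ((wt i * β i : ℕ) : ℤ)) ≤
      slen β + 2 * (polyPart β : ℤ) + (β (Sum.inl 0) : ℤ) := by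
  have h0 : (β (Sum.inl 0) : ℤ) =
      ∑ i ∈ β.support, if i = Sum.inl 0 then (β i : ℤ) else 0 := by
    rw [Finset.sum_ite_eq']
    split_ifs with h
    · rfl
    · simpa using h
  rw [h0, slen, polyPart, Finsupp.sum, Finsupp.sum, Nat.cast_sum, Finset.mul_sum,
    ← Finset.sum_add_distrib, ← Finset.sum_add_distrib]
  refine Finset.sum_le_sum fun i _ => ?_
  rcases i with k | n
  · by_cases hk : k = 0
    · subst hk; simp [wt]
    · simp [wt, hk]
  · have := Nat.mul_le_mul_right (β (Sum.inr n)) (plen_pos n)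
    simp only [wt, reduceCtorEq, if_false]
    omega

lemma slen_ge (β : MIdx) (h : Populated β) : -1 ≤ slen β := by
  rcases h with ⟨n, rfl⟩ | h
  · simp [slen, eN]
  · omega

/-- Coercivity of `|·|_≺` on populated multi-indices: for every `M`, the set of
populated `β` with `|β|_≺ ≤ M` is finite. -/
theorem statement6 (M : ℝ) :
    {β : MIdx | Populated β ∧ precNorm β ≤ M}.Finite := by
  obtain ⟨N, hN⟩ := exists_nat_ge (4 * M + 3)
  refine (Set.finite_Iic
    (Finsupp.indicator (wt_fin N).toFinset (fun _ _ => N) : MIdx)).subset ?_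
  rintro β ⟨hp, hM⟩
  have h1 := slen_ge β hp
  have h2 := wt_le β
  have h3 : 4 * slen β + 2 * (polyPart β : ℤ) + (β (Sum.inl 0) : ℤ) + 3 ≤ N := by
    have h' : 4 * (slen β : ℝ) + 2 * (polyPart β : ℝ) + (β (Sum.inl 0) : ℝ) + 3 ≤ N := by
      simp only [precNorm] at hM
      linarith
    exact_mod_cast h'
  rw [Set.mem_Iic, Finsupp.le_def]
  intro i
  by_cases hi : β i = 0
  · rw [hi]; exact Nat.zero_le _
  have h4 : ((wt i * β i : ℕ) : ℤ) ≤ ∑ i ∈ β.support, ((wt i * β i : ℕ) : ℤ) :=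
    Finset.single_le_sum (f := fun i => ((wt i * β i : ℕ) : ℤ))
      (fun _ _ => Int.natCast_nonneg _) (Finsupp.mem_support_iff.2 hi)
  have h5 : wt i * β i ≤ N := by omega
  have h6 : wt i ≤ N := le_trans (Nat.le_mul_of_pos_right _ (Nat.pos_of_ne_zero hi)) h5
  have h7 : β i ≤ N := le_trans (Nat.le_mul_of_pos_left _ (wt_pos i)) h5
  rw [Finsupp.indicator_of_mem (by simpa using h6)]
  exact h7
end
end

section
/- Let k ∈ ℕ and let γ₁, …, γ_{k+1} be populated multi-indices, and set β := e_k + γ₁ + ⋯ + γ_{k+1}. Then the following are equivalent: (i) β is populated; (ii) [β] ≥ 0; (iii) not all of γ₁, …, γ_{k+1} are purely polynomial. -/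
open Finsupp

noncomputable section

theorem slen_add (a b : MIdx) : slen (a + b) = slen a + slen b := by
  unfold slen
  apply Finsupp.sum_add_index'
  · rintro (k | n) <;> simp
  · rintro (k | n) m₁ m₂ <;> simp <;> ring

theorem slen_sum {n : ℕ} (g : Fin n → MIdx) : slen (∑ i, g i) = ∑ i, slen (g i) := by
  let f : MIdx →+ ℤ := AddMonoidHom.mk' slen slen_add
  exact map_sum f g Finset.univ

theorem slen_eK (k : ℕ) : slen (eK k) = k := by
  unfold slen eK
  rw [Finsupp.sum_single_index] <;> simp

theorem slen_poly {b : MIdx} (h : PurelyPoly b) : slen b = -1 := by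
  obtain ⟨n, rfl⟩ := h
  unfold slen eN
  rw [Finsupp.sum_single_index] <;> simp

theorem not_poly (k : ℕ) (b : MIdx) : ¬ PurelyPoly (eK k + b) := by
  rintro ⟨n, h⟩
  have := DFunLike.congr_fun h (Sum.inl k)
  simp [eK, eN] at this

/-- Let `γ₁, …, γ_{k+1}` be populated and `β = e_k + γ₁ + ⋯ + γ_{k+1}`.
Then: `β` populated ↔ `[β] ≥ 0` ↔ not all of the `γᵢ` are purely polynomial. -/
theorem statement9 (k : ℕ) (γs : Fin (k + 1) → MIdx)
    (hγ : ∀ i, Populated (γs i)) :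
    (Populated (eK k + ∑ i, γs i) ↔ 0 ≤ slen (eK k + ∑ i, γs i))
    ∧ (0 ≤ slen (eK k + ∑ i, γs i) ↔ ¬ ∀ i, PurelyPoly (γs i)) := by
  refine ⟨⟨fun h => h.resolve_left (not_poly _ _), Or.inr⟩, ?_⟩
  rw [slen_add, slen_sum, slen_eK]
  constructor
  · intro h hall
    rw [Finset.sum_congr rfl (fun i _ => slen_poly (hall i))] at h
    simp at h
  · intro h
    push Not at h
    obtain ⟨j, hj⟩ := h
    have hj0 : 0 ≤ slen (γs j) := (hγ j).resolve_left hj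
    have hge : ∀ i, -1 ≤ slen (γs i) := fun i => by
      rcases hγ i with h | h
      · rw [slen_poly h]
      · omega
    rw [Fin.sum_univ_succAbove _ j]
    have : ∑ i : Fin k, (-1 : ℤ) ≤ ∑ i : Fin k, slen (γs (j.succAbove i)) :=
      Finset.sum_le_sum fun i _ => hge _
    simp at this
    omega
end
end

section
/- Let 0 < α ≤ 1. For every populated multi-index β' and every n ∈ ℕ² with |n| < |β'| (where |(0,0)| = 0), one has (1/2)|n| + (1/4)·𝟙_{n=(0,0)} − 1 < |β'|_≺. -/
open Finsupp

noncomputable section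

/-- For `0 < α ≤ 1`, every populated `β'` and every `n ∈ ℕ²` with `|n| < |β'|`, one
has `(1/2)|n| + (1/4)·𝟙_{n=(0,0)} − 1 < |β'|_≺`. -/
theorem statement10 (α : ℝ) (hα0 : 0 < α) (hα1 : α ≤ 1) (β' : MIdx)
    (hβ' : Populated β') (n : ℕ × ℕ) (hn : (plen n : ℝ) < homog α β') :
    (plen n : ℝ) / 2 + (if n = (0, 0) then (1 / 4 : ℝ) else 0) - 1
      < precNorm β' := by
  have hB : (0 : ℝ) ≤ (β' (Sum.inl 0) : ℝ) := Nat.cast_nonneg _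
  have hP : (0 : ℝ) ≤ (polyPart β' : ℝ) := Nat.cast_nonneg _
  unfold homog at hn
  unfold precNorm
  rcases hβ' with ⟨m, rfl⟩ | hs
  · have h1 : slen (eN m) = -1 := by
      simp [slen, eN]
    have h2 : polyPart (eN m) = plen m.val := by
      simp [polyPart, eN]
    have h3 : 1 ≤ plen m.val := by
      obtain ⟨⟨a, b⟩, hm⟩ := m
      simp only [plen]
      by_contra h
      apply hm
      have ha : a = 0 := by omega
      have hb : b = 0 := by omega
      rw [ha, hb]
    have h3' : (1 : ℝ) ≤ (plen m.val : ℝ) := by exact_mod_cast h3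
    rw [h1, h2] at hn
    rw [h1, h2]
    push_cast at hn ⊢
    split_ifs with h
    · subst h
      simp only [plen] at h3' ⊢
      push_cast at h3' ⊢
      linarith
    · linarith
  · have hs' : (0 : ℝ) ≤ (slen β' : ℝ) := by exact_mod_cast hs
    have h4 : α * (1 + (slen β' : ℝ)) ≤ 1 + (slen β' : ℝ) := by nlinarith
    split_ifs with h
    · subst h
      simp only [plen]
      push_cast
      linarith
    · linarith
end
end

section
/- Let k ≥ 1, let n₁, …, n_k ∈ ℕ², and let β, γ be multi-indices. If the matrix entry of the composition satisfies (D^{(n₁)} ⋯ D^{(n_k)})_β^γ ≠ 0, then [γ] = [β] − k, |γ|_p = |β|_p + Σ_{i=1}^k |n_i|, and γ(0) ≤ β(0) + #{ i : n_i = (0,0) }. -/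
open Finsupp

noncomputable section

open Classical in
/-- The matrix entry `(D^(0))_β^γ` of the derivation
`D^(0) = Σ_k (k+1) z_{k+1} ∂_{z_k}`: it is `(k+1)·γ(k)` if there exists `k` with
`γ + e_{k+1} = β + e_k` (such `k` is unique), and `0` otherwise. -/
def D0 (β γ : MIdx) : ℕ :=
  if h : ∃ k : ℕ, γ + eK (k + 1) = β + eK k then
    (h.choose + 1) * γ (Sum.inl h.choose)
  else 0

open Classical in
/-- The matrix entry of `D^(n)` for `n ∈ ℕ²`, where `D^((0,0))` means `D^(0)` and,
for `n ≠ (0,0)`, `(D^(n))_β^γ = β(n) + 1` if `γ = β + e_n`, and `0` otherwise. -/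
def DMat (n : ℕ × ℕ) : MIdx → MIdx → ℕ :=
  if hn : n = (0, 0) then D0
  else fun β γ =>
    if γ = β + eN ⟨n, hn⟩ then β (Sum.inr ⟨n, hn⟩) + 1 else 0

/-- Composition of two `ℕ`-valued matrices indexed by multi-indices; the sum over the
intermediate multi-index is well-defined (by row-finiteness) as a `finsum`. -/
def matMul (A B : MIdx → MIdx → ℕ) : MIdx → MIdx → ℕ :=
  fun β γ => ∑ᶠ δ : MIdx, A β δ * B δ γ

open Classical in
/-- The identity matrix. -/
def matId : MIdx → MIdx → ℕ := fun β γ => if γ = β then 1 else 0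

/-- Composition of a list of matrices. -/
def matProd : List (MIdx → MIdx → ℕ) → MIdx → MIdx → ℕ
  | [] => matId
  | A :: l => matMul A (matProd l)

/-- The `l`-fold matrix power of `D^(0)`. -/
def D0pow : ℕ → MIdx → MIdx → ℕ
  | 0 => matId
  | l + 1 => matMul D0 (D0pow l)

theorem polyPart_add (a b : MIdx) : polyPart (a + b) = polyPart a + polyPart b := by
  unfold polyPart
  apply Finsupp.sum_add_index'
  · rintro (k | n) <;> simp
  · rintro (k | n) x y
    · simp only
    · simp only; ring

theorem slen_eN (n) : slen (eN n) = -1 := by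
  unfold slen eN
  rw [Finsupp.sum_single_index] <;> simp

theorem polyPart_eK (k : ℕ) : polyPart (eK k) = 0 := by
  unfold polyPart eK
  rw [Finsupp.sum_single_index] <;> rfl

theorem polyPart_eN (n) : polyPart (eN n) = plen n.val := by
  unfold polyPart eN
  rw [Finsupp.sum_single_index] <;> simp

theorem DMat_step (n : ℕ × ℕ) (β γ : MIdx) (h : DMat n β γ ≠ 0) :
    slen γ = slen β - 1 ∧ polyPart γ = polyPart β + plen n
    ∧ γ (Sum.inl 0) ≤ β (Sum.inl 0) + (if n = (0, 0) then 1 else 0) := by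
  unfold DMat at h
  by_cases hn : n = (0, 0)
  · rw [dif_pos hn] at h
    unfold D0 at h
    by_cases hk : ∃ k : ℕ, γ + eK (k + 1) = β + eK k
    · obtain ⟨k, hk⟩ := hk
      have h1 := congrArg slen hk
      have h2 := congrArg polyPart hk
      have h3 := DFunLike.congr_fun hk (Sum.inl 0)
      simp only [slen_add, polyPart_add, slen_eK, polyPart_eK] at h1 h2
      have h4 : eK k (Sum.inl 0) ≤ 1 := by
        unfold eK
        rw [Finsupp.single_apply]
        split_ifs <;> simp
      rw [Finsupp.add_apply, Finsupp.add_apply] at h3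
      subst hn
      refine ⟨?_, ?_, ?_⟩
      · push_cast at h1; linarith
      · simpa [plen] using h2
      · rw [if_pos rfl]; omega
    · rw [dif_neg hk] at h
      exact absurd rfl h
  · rw [dif_neg hn] at h
    have hg : γ = β + eN ⟨n, hn⟩ := by
      by_contra hc
      exact h (if_neg hc)
    subst hg
    refine ⟨?_, ?_, ?_⟩
    · rw [slen_add, slen_eN]; ring
    · rw [polyPart_add, polyPart_eN]
    · simp [eN]

/-- If `(D^{(n₁)} ⋯ D^{(n_k)})_β^γ ≠ 0` for a nonempty list `n₁, …, n_k`, then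
`[γ] = [β] − k`, `|γ|_p = |β|_p + Σᵢ |nᵢ|`, and `γ(0) ≤ β(0) + #{i : nᵢ = (0,0)}`. -/
theorem statement11 (ns : List (ℕ × ℕ)) (hne : ns ≠ []) (β γ : MIdx)
    (h : matProd (ns.map DMat) β γ ≠ 0) :
    slen γ = slen β - ns.length
    ∧ polyPart γ = polyPart β + (ns.map plen).sum
    ∧ γ (Sum.inl 0) ≤ β (Sum.inl 0) + ns.count ((0, 0) : ℕ × ℕ) := by
  clear hne
  induction ns generalizing β with
  | nil =>
    have hg : γ = β := by
      by_contra hc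
      exact h (if_neg hc)
    subst hg
    simp
  | cons n l ih =>
    have h' : (∑ᶠ δ : MIdx, DMat n β δ * matProd (l.map DMat) δ γ) ≠ 0 := h
    obtain ⟨δ, hδ⟩ : ∃ δ : MIdx, DMat n β δ * matProd (l.map DMat) δ γ ≠ 0 := by
      by_contra! hc
      exact h' (by simp only [hc, finsum_zero])
    obtain ⟨a1, a2, a3⟩ := DMat_step n β δ (left_ne_zero_of_mul hδ)
    obtain ⟨b1, b2, b3⟩ := ih δ (right_ne_zero_of_mul hδ)
    refine ⟨?_, ?_, ?_⟩
    · rw [b1, a1, List.length_cons]; push_cast; ring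
    · rw [b2, a2, List.map_cons, List.sum_cons]; ring
    · rw [List.count_cons]
      simp only [beq_iff_eq]
      omega
end
end

section
/- (Lemma 5.1, triangular dependencies.) Let 0 < α ≤ 1 and k ≥ 1. Let β₁, …, β_{k+1} be populated multi-indices, let γ be a populated multi-index that is NOT purely polynomial, and let n₁, …, n_k ∈ ℕ² satisfy |n_i| < |β_i| for i = 1, …, k. Set β := β₁ + ⋯ + β_{k+1}. If the composition matrix entry (D^{(n₁)} ⋯ D^{(n_k)})_{β_{k+1}}^γ ≠ 0, then β_i ≺ β for every i = 1, …, k. -/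
open Finsupp

noncomputable section

theorem precNorm_add (a b : MIdx) : precNorm (a + b) = precNorm a + precNorm b := by
  unfold precNorm
  rw [slen_add, polyPart_add, Finsupp.add_apply]
  push_cast
  ring

theorem precNorm_zero : precNorm 0 = 0 := by
  have := precNorm_add 0 0
  rw [add_zero] at this
  linarith

theorem precNorm_sum {ι : Type*} (s : Finset ι) (f : ι → MIdx) :
    precNorm (∑ j ∈ s, f j) = ∑ j ∈ s, precNorm (f j) := by
  classical
  induction s using Finset.induction_on with
  | empty => simp [precNorm_zero]
  | insert a s ha ih => rw [Finset.sum_insert ha, Finset.sum_insert ha, precNorm_add, ih]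

theorem slen_le_precNorm (β : MIdx) : (slen β : ℝ) ≤ precNorm β := by
  unfold precNorm
  have h1 : (0 : ℝ) ≤ (polyPart β : ℝ) := Nat.cast_nonneg _
  have h2 : (0 : ℝ) ≤ (β (Sum.inl 0) : ℝ) := Nat.cast_nonneg _
  linarith

theorem precNorm_ge (β : MIdx) (h : Populated β) : -(1 / 2 : ℝ) ≤ precNorm β := by
  rcases h with ⟨n, rfl⟩ | h
  · unfold precNorm
    rw [slen_eN, polyPart_eN]
    have h2 : (0 : ℝ) ≤ (eN n (Sum.inl 0) : ℝ) := Nat.cast_nonneg _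
    have h1 : 1 ≤ plen n.val := by
      obtain ⟨⟨a, b⟩, hn⟩ := n
      simp only [ne_eq, Prod.mk.injEq, not_and] at hn
      simp only [plen]
      omega
    have h3 : (1 : ℝ) ≤ (plen n.val : ℝ) := by exact_mod_cast h1
    push_cast
    linarith
  · have h1 := slen_le_precNorm β
    have h2 : (0 : ℝ) ≤ (slen β : ℝ) := by exact_mod_cast h
    linarith

theorem slen_DMat (n : ℕ × ℕ) (β γ : MIdx) (h : DMat n β γ ≠ 0) : slen β = slen γ + 1 := by
  unfold DMat at h
  split_ifs at h with hn
  · unfold D0 at h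
    split_ifs at h with hk
    · obtain ⟨k, hk⟩ := hk
      have := congrArg slen hk
      rw [slen_add, slen_add, slen_eK, slen_eK] at this
      push_cast at this
      linarith
    · exact absurd rfl h
  · dsimp only at h
    split_ifs at h with hk
    · rw [hk, slen_add, slen_eN]
      ring
    · exact absurd rfl h

theorem slen_matProd (l : List (ℕ × ℕ)) (β γ : MIdx) (h : matProd (l.map DMat) β γ ≠ 0) :
    slen β = slen γ + l.length := by
  induction l generalizing β with
  | nil =>
    simp only [List.map_nil, matProd, matId] at h
    split_ifs at h with hk
    · simp [hk]
    · exact absurd rfl h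
  | cons n l ih =>
    simp only [List.map_cons, matProd, matMul] at h
    obtain ⟨δ, hδ⟩ : ∃ δ, DMat n β δ * matProd (l.map DMat) δ γ ≠ 0 := by
      by_contra hc
      push Not at hc
      exact h (by simp only [hc, finsum_zero])
    have h1 := slen_DMat n β δ (left_ne_zero_of_mul hδ)
    have h2 := ih δ (right_ne_zero_of_mul hδ)
    rw [h1, h2, List.length_cons]
    push_cast
    ring

/-- Lemma 5.1 (triangular dependencies): with `0 < α ≤ 1`, `k ≥ 1`, populated
`β₁, …, β_{k+1}`, a populated and not purely polynomial `γ`, and `n₁, …, n_k ∈ ℕ²`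
with `|nᵢ| < |βᵢ|`, set `β = β₁ + ⋯ + β_{k+1}`; if
`(D^{(n₁)} ⋯ D^{(n_k)})_{β_{k+1}}^γ ≠ 0` then `βᵢ ≺ β` for `i = 1, …, k`. -/
theorem statement12 (α : ℝ) (hα0 : 0 < α) (hα1 : α ≤ 1) (k : ℕ) (hk : 1 ≤ k)
    (βs : Fin (k + 1) → MIdx) (hpop : ∀ i, Populated (βs i))
    (γ : MIdx) (hγpop : Populated γ) (hγnpp : ¬ PurelyPoly γ)
    (ns : Fin k → ℕ × ℕ)
    (hn : ∀ i : Fin k, (plen (ns i) : ℝ) < homog α (βs i.castSucc))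
    (h : matProd ((List.ofFn ns).map DMat) (βs (Fin.last k)) γ ≠ 0) :
    ∀ i : Fin k, precNorm (βs i.castSucc) < precNorm (∑ j, βs j) := by
  intro i
  have hs := slen_matProd _ _ _ h
  rw [List.length_ofFn] at hs
  have hγ : 0 ≤ slen γ := hγpop.resolve_left hγnpp
  have h1 := slen_le_precNorm (βs (Fin.last k))
  have h2 : (k : ℝ) ≤ (slen (βs (Fin.last k)) : ℝ) := by
    have : (k : ℤ) ≤ slen (βs (Fin.last k)) := by linarith
    exact_mod_cast this
  rw [precNorm_sum, Fin.sum_univ_castSucc, ← Finset.add_sum_erase _ _ (Finset.mem_univ i)]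
  have h3 := Finset.card_nsmul_le_sum (Finset.univ.erase i)
    (fun j : Fin k => precNorm (βs j.castSucc)) (-(1 / 2 : ℝ))
    (fun j _ => precNorm_ge _ (hpop _))
  rw [Finset.card_erase_of_mem (Finset.mem_univ i), Finset.card_univ, Fintype.card_fin,
    nsmul_eq_mul, Nat.cast_sub hk] at h3
  have h4 : (1 : ℝ) ≤ (k : ℝ) := by exact_mod_cast hk
  push_cast at h3
  linarith
end
end

section
/- Let α > 0 and let β be a populated multi-index with |β| < 2. Then β(n) = 0 for all n ∈ ℕ² \ {(0,0)} if and only if Σ_{n≠(0,0)} n₁·β(n) is even. -/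
open Finsupp

noncomputable section

/-- The quantity `Σ_{n≠(0,0)} n₁·β(n)`. -/
def firstComp (β : MIdx) : ℕ :=
  β.sum fun i m =>
    match i with
    | Sum.inl _ => 0
    | Sum.inr n => n.val.1 * m

theorem aux_slen (β : MIdx) (hβ : Populated β) : -1 ≤ slen β := by
  rcases hβ with ⟨n, rfl⟩ | h
  · simp [slen, eN]
  · omega

theorem aux_single (β : MIdx) (f : RSIdx → ℕ → ℕ) (i : RSIdx) (hi : β i ≠ 0) :
    f i (β i) ≤ β.sum f :=
  Finset.single_le_sum (f := fun i => f i (β i)) (fun _ _ => Nat.zero_le _)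
    (Finsupp.mem_support_iff.2 hi)

/-- For `α > 0` and a populated `β` with `|β| < 2`: `β(n) = 0` for all `n ≠ (0,0)`
if and only if `Σ_{n≠(0,0)} n₁·β(n)` is even. -/
theorem statement18 (α : ℝ) (hα : 0 < α) (β : MIdx) (hβ : Populated β)
    (h2 : homog α β < 2) :
    (∀ n, β (Sum.inr n) = 0) ↔ Even (firstComp β) := by
  have hs : (-1 : ℝ) ≤ (slen β : ℝ) := by exact_mod_cast aux_slen β hβ
  have hp : polyPart β < 2 := by
    have h3 : 0 ≤ α * (1 + (slen β : ℝ)) := mul_nonneg hα.le (by linarith)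
    have h4 : (polyPart β : ℝ) < 2 := by
      unfold homog at h2
      linarith
    exact_mod_cast h4
  constructor
  · intro h
    have h0 : firstComp β = 0 := by
      unfold firstComp Finsupp.sum
      apply Finset.sum_eq_zero
      rintro (k | n) _
      · rfl
      · simp [h n]
    simp [h0]
  · intro he n
    by_contra hn
    have h1 : plen n.val * β (Sum.inr n) ≤ polyPart β := by
      unfold polyPart
      refine le_trans ?_ (aux_single β _ (Sum.inr n) hn)
      exact le_rfl
    have h3 : n.val.1 * β (Sum.inr n) ≤ firstComp β := by
      unfold firstComp
      refine le_trans ?_ (aux_single β _ (Sum.inr n) hn)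
      exact le_rfl
    have h5 : firstComp β ≤ polyPart β := by
      unfold firstComp polyPart Finsupp.sum
      apply Finset.sum_le_sum
      rintro (k | m) _
      · exact le_rfl
      · exact Nat.mul_le_mul_right _ (by unfold plen; omega)
    have hpos : 1 ≤ β (Sum.inr n) := Nat.one_le_iff_ne_zero.2 hn
    have h6 : plen n.val ≤ 1 := by nlinarith
    have h7 : n.val.1 ≤ firstComp β := by nlinarith
    have h8 : n.val.1 ≠ 0 := by
      intro h9
      apply n.2
      unfold plen at h6
      exact Prod.ext h9 (by simp; omega)
    obtain ⟨r, hr⟩ := he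
    omega
end
end
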